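/- Let α ∈ (1/3,1/2], let (W,𝕎) be an ℝ^d-valued α-Hölder rough path on [0,1], and let (Y,Y') be a controlled rough path with Y : [0,1] → L(ℝ^d,ℝ^n) and Y' : [0,1] → L(ℝ^d, L(ℝ^d,ℝ^n)). Then there exists a function I on pairs 0 ≤ s ≤ t ≤ 1 with values in ℝ^n such that: (i) for every s ≤ t and every ε > 0 there is δ > 0 so that for every partition s = t_0 < t_1 < … < t_k = t with max_i (t_{i+1}−t_i) < δ one has ‖Σ_i (Y_{t_i}·(W_{t_{i+1}}−W_{t_i}) + Y'_{t_i}·𝕎_{t_i,t_{i+1}}) − I(s,t)‖ < ε; and (ii) there exists a constant C depending only on α such that ‖I(s,t) − Y_s·(W_t−W_s) − Y'_s·𝕎_{s,t}‖ ≤ C·(‖W‖_α·‖R^Y‖_{2α} + ‖𝕎‖_{2α}·‖Y'‖_α)·|t−s|^{3α} for all 0 ≤ s ≤ t ≤ 1. -/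

import Mathlib

/-! The integral is built by sewing the germ `Ξ s t = Y_s (W_t - W_s) + Y'_s 𝕎_{s,t}`. Chen's
relation gives `Ξ s t - Ξ s u - Ξ u t = -R_{s,u} (W_t - W_u) - (Y'_u - Y'_s) 𝕎_{u,t}`, which is
`O((t - s) ^ θ)` with `θ = 3α > 1` (`germ_defect`).

For such an almost additive germ, the Riemann sum over any partition of `[s,t]` differs from
`Ξ s t` by at most `A (t - s) ^ θ` (`sewing_maximal`): cutting out the partition interval that
contains the midpoint costs two defects and leaves two pieces of at most half the length, and
`2 · 2^{-θ} < 1` closes the induction.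

The sums over the uniform grids cut off at time `t` are therefore bounded, so in a proper space
they converge along an ultrafilter, to some `F t`. Up to an error that vanishes with the mesh, the
sum for `t` minus the sum for `s` is a Riemann sum over a partition of `[s,t]`; hence
`‖F t - F s - Ξ s t‖ ≤ A (t - s) ^ θ` (`sewing`). The additive function `I s t = F t - F s` is
the integral: summing this local bound over a partition of mesh `δ` shows that the Riemann sum is
within `A δ ^ (θ - 1) (t - s)` of `I s t` (`partitionLimit_of_local_bound`), so genuine convergence
holds although `F` was only obtained along an ultrafilter. -/

noncomputable section

/-- The set of Hölder quotients `‖f t - f s‖ / |t - s| ^ β` over `s ≠ t` in `[a,b]`. -/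
def holderSet {X : Type*} [NormedAddCommGroup X] (β a b : ℝ) (f : ℝ → X) : Set ℝ :=
  {C : ℝ | ∃ s t : ℝ, s ∈ Set.Icc a b ∧ t ∈ Set.Icc a b ∧ s ≠ t ∧
    C = ‖f t - f s‖ / |t - s| ^ β}

/-- The `β`-Hölder seminorm of `f` on `[a,b]`. -/
def holderNorm {X : Type*} [NormedAddCommGroup X] (β a b : ℝ) (f : ℝ → X) : ℝ :=
  sSup (holderSet β a b f)

/-- The set of Hölder quotients `‖R s t‖ / (t - s) ^ β` over `s < t` in `[a,b]` for a
two-parameter function `R`. -/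
def holder2Set {X : Type*} [NormedAddCommGroup X] (β a b : ℝ) (R : ℝ → ℝ → X) : Set ℝ :=
  {C : ℝ | ∃ s t : ℝ, s ∈ Set.Icc a b ∧ t ∈ Set.Icc a b ∧ s < t ∧
    C = ‖R s t‖ / (t - s) ^ β}

/-- The `β`-Hölder seminorm of a two-parameter function on `[a,b]`. -/
def holder2Norm {X : Type*} [NormedAddCommGroup X] (β a b : ℝ) (R : ℝ → ℝ → X) : ℝ :=
  sSup (holder2Set β a b R)

/-- The supremum norm of `f` on `[a,b]`. -/
def supNorm {X : Type*} [NormedAddCommGroup X] (a b : ℝ) (f : ℝ → X) : ℝ :=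
  sSup {C : ℝ | ∃ t ∈ Set.Icc a b, C = ‖f t‖}

/-- The remainder `R^Y_{s,t} = Y_t - Y_s - Y'_s (W_t - W_s)` of a controlled rough path. -/
def rem {d : ℕ} {X : Type*} [NormedAddCommGroup X] [NormedSpace ℝ X]
    (W : ℝ → Fin d → ℝ) (Y : ℝ → X) (Y' : ℝ → (Fin d → ℝ) →L[ℝ] X) : ℝ → ℝ → X :=
  fun s t => Y t - Y s - Y' s (W t - W s)

/-- The action of `B ∈ L(ℝ^d, L(ℝ^d, X))`, viewed as an element of `L(ℝ^d ⊗ ℝ^d, X)`, on a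
second-order increment `M ∈ ℝ^d ⊗ ℝ^d` (represented as a `d × d` matrix). -/
def bilApply {d : ℕ} {X : Type*} [NormedAddCommGroup X] [NormedSpace ℝ X]
    (B : (Fin d → ℝ) →L[ℝ] ((Fin d → ℝ) →L[ℝ] X)) (M : Fin d → Fin d → ℝ) : X :=
  ∑ i : Fin d, ∑ j : Fin d, M i j • B (Pi.single i 1) (Pi.single j 1)

/-- `PartitionLimit a b S I` says: the compensated Riemann sums `∑ S (tᵢ) (tᵢ₊₁)` over
partitions `a = t₀ < t₁ < … < t_k = b` converge to `I` as the mesh tends to `0`. -/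
def PartitionLimit {X : Type*} [NormedAddCommGroup X] (a b : ℝ) (S : ℝ → ℝ → X) (I : X) :
    Prop :=
  ∀ ε : ℝ, 0 < ε → ∃ δ : ℝ, 0 < δ ∧ ∀ (k : ℕ) (π : ℕ → ℝ),
    0 < k → π 0 = a → π k = b → (∀ i < k, π i < π (i + 1)) →
    (∀ i < k, π (i + 1) - π i < δ) →
    ‖(∑ i ∈ Finset.range k, S (π i) (π (i + 1))) - I‖ < ε

/-! ### Sewing of almost additive germs -/

lemma exists_step_around {π : ℕ → ℝ} {c : ℝ} (h0 : π 0 ≤ c) :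
    ∀ n : ℕ, 0 < n → c ≤ π n → ∃ m < n, π m ≤ c ∧ c ≤ π (m + 1) := by
  intro n
  induction n with
  | zero => intro h; exact absurd h (lt_irrefl _)
  | succ k ih =>
    intro _ hc
    by_cases hk : π k ≤ c
    · exact ⟨k, Nat.lt_succ_self k, hk, hc⟩
    · have hk0 : 0 < k := by
        rcases Nat.eq_zero_or_pos k with h | h
        · subst h; exact absurd h0 hk
        · exact h
      obtain ⟨m, hm, h1, h2⟩ := ih hk0 (le_of_not_ge hk)
      exact ⟨m, hm.trans (Nat.lt_succ_self k), h1, h2⟩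

/-- The constant of the sewing lemma, the solution of `A = 2 + 2 · 2^{-θ} · A`. -/
def sewConst (θ : ℝ) : ℝ := 2 / (1 - 2 * (1 / 2 : ℝ) ^ θ)

lemma two_mul_half_rpow_lt {θ : ℝ} (hθ : 1 < θ) : 2 * (1 / 2 : ℝ) ^ θ < 1 := by
  have h := Real.rpow_lt_rpow_of_exponent_gt (x := (1 / 2 : ℝ)) (by norm_num) (by norm_num) hθ
  rw [Real.rpow_one] at h
  linarith

lemma sewConst_pos {θ : ℝ} (hθ : 1 < θ) : 0 < sewConst θ := by
  have := two_mul_half_rpow_lt hθ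
  unfold sewConst
  apply div_pos <;> linarith

lemma sewConst_eq {θ : ℝ} (hθ : 1 < θ) :
    sewConst θ = 2 + 2 * (1 / 2 : ℝ) ^ θ * sewConst θ := by
  have := two_mul_half_rpow_lt hθ
  have h : 1 - 2 * (1 / 2 : ℝ) ^ θ ≠ 0 := by linarith
  unfold sewConst
  field_simp
  ring

section Sewing

variable {X : Type*} [NormedAddCommGroup X]

/-- `Ξ` is almost additive on `[0,1]`: its defect of additivity is at most `K (t - s) ^ θ`. -/
def AlmostAdditive (Ξ : ℝ → ℝ → X) (K θ : ℝ) : Prop :=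
  ∀ s u t : ℝ, 0 ≤ s → s ≤ u → u ≤ t → t ≤ 1 → ‖Ξ s t - Ξ s u - Ξ u t‖ ≤ K * (t - s) ^ θ

lemma AlmostAdditive.diag {Ξ : ℝ → ℝ → X} {K θ : ℝ} (h : AlmostAdditive Ξ K θ) (hθ : 1 < θ)
    {s : ℝ} (h0 : 0 ≤ s) (h1 : s ≤ 1) : Ξ s s = 0 := by
  have := h s s s h0 le_rfl le_rfl h1
  rw [sub_self, sub_self, zero_sub, norm_neg, Real.zero_rpow (by linarith), mul_zero] at this
  exact norm_le_zero_iff.1 this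

/-- The maximal inequality for Riemann sums, uniform over partitions (with repeated points
allowed). -/
lemma sewing_maximal {Ξ : ℝ → ℝ → X} {K θ : ℝ} (h : AlmostAdditive Ξ K θ) (hK : 0 ≤ K)
    (hθ : 1 < θ) (n : ℕ) : ∀ π : ℕ → ℝ, Monotone π → (∀ i, π i ∈ Set.Icc (0 : ℝ) 1) →
      ‖∑ i ∈ Finset.range n, Ξ (π i) (π (i + 1)) - Ξ (π 0) (π n)‖
        ≤ sewConst θ * K * (π n - π 0) ^ θ := by
  induction n using Nat.strong_induction_on with
  | _ n ih =>
  intro π hπ h01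
  have hA := sewConst_pos hθ
  rcases Nat.eq_zero_or_pos n with rfl | hn
  · rw [Finset.sum_range_zero, h.diag hθ (h01 0).1 (h01 0).2, sub_self, sub_self, norm_zero,
      Real.zero_rpow (by linarith), mul_zero]
  have hL : π 0 ≤ π n := hπ (Nat.zero_le n)
  obtain ⟨m, hm, hm1, hm2⟩ := exists_step_around (π := π) (c := (π 0 + π n) / 2)
    (by linarith) n hn (by linarith)
  obtain ⟨r, rfl⟩ := Nat.exists_eq_add_of_lt hm
  rw [show m + r + 1 = m + 1 + r by omega] at *
  set L := π (m + 1 + r) - π 0 with hLdef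
  have hL0 : 0 ≤ L := by linarith
  have e1 := ih m (by omega) π hπ h01
  have e2 := ih r (by omega) (fun i => π (m + 1 + i)) (fun i j hij => hπ (by omega))
    (fun i => h01 _)
  have d1 := h (π 0) (π (m + 1)) (π (m + 1 + r)) (h01 _).1 (hπ (by omega)) (hπ (by omega))
    (h01 _).2
  have d2 := h (π 0) (π m) (π (m + 1)) (h01 _).1 (hπ (by omega)) (hπ (by omega)) (h01 _).2
  have hhalf : (L / 2) ^ θ = (1 / 2 : ℝ) ^ θ * L ^ θ := by
    rw [← Real.mul_rpow (by norm_num) hL0]; congr 1; ring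
  have b1 : (π m - π 0) ^ θ ≤ (1 / 2 : ℝ) ^ θ * L ^ θ := by
    rw [← hhalf]
    exact Real.rpow_le_rpow (by linarith [hπ (Nat.zero_le m)]) (by linarith) (by linarith)
  have b2 : (π (m + 1 + r) - π (m + 1 + 0)) ^ θ ≤ (1 / 2 : ℝ) ^ θ * L ^ θ := by
    rw [← hhalf]
    refine Real.rpow_le_rpow ?_ ?_ (by linarith)
    · linarith [hπ (show m + 1 + 0 ≤ m + 1 + r by omega)]
    · rw [add_zero]; linarith
  have b3 : (π (m + 1) - π 0) ^ θ ≤ L ^ θ := by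
    refine Real.rpow_le_rpow ?_ ?_ (by linarith)
    · linarith [hπ (Nat.zero_le (m + 1))]
    · linarith [hπ (show m + 1 ≤ m + 1 + r by omega)]
  have hAK : 0 ≤ sewConst θ * K := by positivity
  have c1 := e1.trans (mul_le_mul_of_nonneg_left b1 hAK)
  have c2 := e2.trans (mul_le_mul_of_nonneg_left b2 hAK)
  have c3 := d2.trans (mul_le_mul_of_nonneg_left b3 hK)
  have key : ∑ i ∈ Finset.range (m + 1 + r), Ξ (π i) (π (i + 1)) - Ξ (π 0) (π (m + 1 + r))
      = (∑ i ∈ Finset.range m, Ξ (π i) (π (i + 1)) - Ξ (π 0) (π m))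
        + (∑ i ∈ Finset.range r, Ξ (π (m + 1 + i)) (π (m + 1 + (i + 1)))
            - Ξ (π (m + 1 + 0)) (π (m + 1 + r)))
        - (Ξ (π 0) (π (m + 1 + r)) - Ξ (π 0) (π (m + 1)) - Ξ (π (m + 1)) (π (m + 1 + r)))
        - (Ξ (π 0) (π (m + 1)) - Ξ (π 0) (π m) - Ξ (π m) (π (m + 1))) := by
    rw [Finset.sum_range_add, Finset.sum_range_succ]
    simp only [add_zero, add_assoc]
    abel
  rw [key]
  refine (norm_sub_le _ _).trans ?_
  refine (add_le_add_left (norm_sub_le _ _) _).trans ?_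
  refine (add_le_add_left (add_le_add_left (norm_add_le _ _) _) _).trans ?_
  refine (add_le_add (add_le_add (add_le_add c1 c2) d1) c3).trans (le_of_eq ?_)
  linear_combination (-(K * L ^ θ)) * sewConst_eq hθ

/-- Cutting the interval `[a,b]` off at `t` splits it, up to one defect, into its part cut off at
`s` and its part clamped to `[s,t]`. -/
lemma AlmostAdditive.cut {Ξ : ℝ → ℝ → X} {K θ : ℝ} (h : AlmostAdditive Ξ K θ) (hK : 0 ≤ K)
    (hθ : 1 < θ) {a b s t : ℝ} (ha : 0 ≤ a) (hab : a ≤ b) (hs : 0 ≤ s) (hst : s ≤ t)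
    (ht : t ≤ 1) :
    ‖Ξ (min a t) (min b t) - Ξ (min a s) (min b s) - Ξ (max s (min a t)) (max s (min b t))‖
      ≤ K * (b - a) ^ θ := by
  have hnn : 0 ≤ K * (b - a) ^ θ := mul_nonneg hK (Real.rpow_nonneg (by linarith) _)
  have hds := h.diag hθ hs (hst.trans ht)
  rcases le_total b s with hbs | hsb
  · rw [min_eq_left (hab.trans (hbs.trans hst)), min_eq_left (hbs.trans hst),
      min_eq_left (hab.trans hbs), min_eq_left hbs, max_eq_left (hab.trans hbs),
      max_eq_left hbs, hds]
    simpa using hnn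
  · rcases le_total s a with hsa | has
    · rw [min_eq_right hsa, min_eq_right hsb, max_eq_right (le_min hsa hst),
        max_eq_right (le_min hsb hst), hds]
      simpa using hnn
    · rw [min_eq_left (has.trans hst), min_eq_left has, min_eq_right hsb, max_eq_left has,
        max_eq_right (le_min hsb hst)]
      refine (h a s (min b t) ha has (le_min hsb hst) ((min_le_right _ _).trans ht)).trans ?_
      gcongr
      · exact sub_nonneg.2 (has.trans (le_min hsb hst))
      · exact min_le_left _ _

/-- The sewing lemma, in the form of a one-parameter function whose increments approximate the
germ. -/
lemma sewing [ProperSpace X] {Ξ : ℝ → ℝ → X} {K θ : ℝ} (h : AlmostAdditive Ξ K θ)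
    (hK : 0 ≤ K) (hθ : 1 < θ) :
    ∃ F : ℝ → X, ∀ s t : ℝ, 0 ≤ s → s ≤ t → t ≤ 1 →
      ‖F t - F s - Ξ s t‖ ≤ sewConst θ * K * (t - s) ^ θ := by
  let p : ℕ → ℕ → ℝ := fun N i => (i : ℝ) / (N + 1 : ℝ)
  have hp0 : ∀ N i, 0 ≤ p N i := fun N i => by positivity
  have hpz : ∀ N, p N 0 = 0 := fun N => by simp [p]
  have hpN : ∀ N, p N (N + 1) = 1 := fun N => by
    simp only [p]; push_cast; exact div_self (by positivity)
  have hpm : ∀ N, Monotone (p N) := fun N i j hij => by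
    simp only [p]; gcongr
  have hpd : ∀ N i, p N (i + 1) - p N i = 1 / (N + 1 : ℝ) := fun N i => by
    simp only [p]; push_cast; ring
  let J : ℕ → ℝ → X := fun N t =>
    ∑ i ∈ Finset.range (N + 1), Ξ (min (p N i) t) (min (p N (i + 1)) t)
  have hmax : ∀ (N : ℕ) (s t : ℝ), 0 ≤ s → s ≤ t → t ≤ 1 →
      ‖∑ i ∈ Finset.range (N + 1), Ξ (max s (min (p N i) t)) (max s (min (p N (i + 1)) t))
        - Ξ s t‖ ≤ sewConst θ * K * (t - s) ^ θ := by
    intro N s t hs hst ht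
    have := sewing_maximal h hK hθ (N + 1) (fun i => max s (min (p N i) t))
      (fun i j hij => max_le_max le_rfl (min_le_min (hpm N hij) le_rfl))
      (fun i => ⟨hs.trans (le_max_left _ _),
        max_le (hst.trans ht) ((min_le_right _ _).trans ht)⟩)
    simpa only [hpz, hpN, min_eq_left (hs.trans hst), min_eq_right ht, max_eq_left hs,
      max_eq_right hst] using this
  let U : Ultrafilter ℕ := Filter.hyperfilter ℕ
  have hU : (U : Filter ℕ) ≤ Filter.atTop := Nat.hyperfilter_le_atTop
  have hlim : ∀ t : ℝ, ∃ x : X, 0 ≤ t → t ≤ 1 →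
      Filter.Tendsto (fun N => J N t) (U : Filter ℕ) (nhds x) := by
    intro t
    by_cases ht : 0 ≤ t ∧ t ≤ 1
    · have hb : ∀ N, J N t ∈ Metric.closedBall (Ξ 0 t) (sewConst θ * K * (t - 0) ^ θ) := by
        intro N
        rw [mem_closedBall_iff_norm]
        have := hmax N 0 t le_rfl ht.1 ht.2
        simpa only [max_eq_right (le_min (hp0 N _) ht.1)] using this
      obtain ⟨x, -, hx⟩ := (isCompact_closedBall (Ξ 0 t)
        (sewConst θ * K * (t - 0) ^ θ)).ultrafilter_le_nhds (U.map (fun N => J N t))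
        (by
          rw [Filter.le_principal_iff]
          exact Filter.mem_map.2 (Filter.univ_mem' hb))
      exact ⟨x, fun _ _ => hx⟩
    · exact ⟨0, fun h0 h1 => absurd ⟨h0, h1⟩ ht⟩
  choose F hF using hlim
  refine ⟨F, fun s t hs hst ht => ?_⟩
  have hlimL := (((hF t (hs.trans hst) ht).sub (hF s hs (hst.trans ht))).sub
    (tendsto_const_nhds (x := Ξ s t))).norm
  -- the total error of comparing cut-off grids is at most `N + 1` defects of intervals of
  -- length `1 / (N + 1)`, and tends to zero since `θ > 1`
  have herr : Filter.Tendsto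
      (fun N : ℕ => sewConst θ * K * (t - s) ^ θ + K * ((N + 1 : ℝ) ^ (-(θ - 1))))
      (U : Filter ℕ) (nhds (sewConst θ * K * (t - s) ^ θ + K * 0)) := by
    refine Filter.Tendsto.mono_left ?_ hU
    refine tendsto_const_nhds.add (tendsto_const_nhds.mul ?_)
    exact (tendsto_rpow_neg_atTop (by linarith : 0 < θ - 1)).comp
      (Filter.tendsto_atTop_add_const_right _ _ tendsto_natCast_atTop_atTop)
  rw [mul_zero, add_zero] at herr
  refine le_of_tendsto_of_tendsto' hlimL herr (fun N => ?_)
  have hcut : ‖∑ i ∈ Finset.range (N + 1), (Ξ (min (p N i) t) (min (p N (i + 1)) t)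
      - Ξ (min (p N i) s) (min (p N (i + 1)) s)
      - Ξ (max s (min (p N i) t)) (max s (min (p N (i + 1)) t)))‖
      ≤ K * ((N + 1 : ℝ) ^ (-(θ - 1))) := by
    refine (norm_sum_le_of_le _ (fun i _ =>
      h.cut hK hθ (hp0 N i) (hpm N (Nat.le_succ i)) hs hst ht)).trans (le_of_eq ?_)
    have hN : (0 : ℝ) < N + 1 := by positivity
    simp only [Nat.succ_eq_add_one, hpd, Finset.sum_const, Finset.card_range, nsmul_eq_mul]
    rw [show -(θ - 1) = 1 + -θ by ring, Real.rpow_add hN, Real.rpow_one, Real.rpow_neg hN.le,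
      one_div, Real.inv_rpow hN.le]
    push_cast
    ring
  have hsplit : J N t - J N s - Ξ s t
      = (∑ i ∈ Finset.range (N + 1), Ξ (max s (min (p N i) t)) (max s (min (p N (i + 1)) t))
          - Ξ s t)
        + ∑ i ∈ Finset.range (N + 1), (Ξ (min (p N i) t) (min (p N (i + 1)) t)
          - Ξ (min (p N i) s) (min (p N (i + 1)) s)
          - Ξ (max s (min (p N i) t)) (max s (min (p N (i + 1)) t))) := by
    simp only [Finset.sum_sub_distrib, J]
    abel
  rw [hsplit]
  exact (norm_add_le _ _).trans (add_le_add (hmax N s t hs hst ht) hcut)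

/-- A germ approximating the increments of `F` to order `θ > 1` has Riemann sums converging to
those increments. -/
lemma partitionLimit_of_local_bound {Ξ : ℝ → ℝ → X} {F : ℝ → X} {B θ : ℝ} (hB : 0 ≤ B)
    (hθ : 1 < θ)
    (hF : ∀ s t : ℝ, 0 ≤ s → s ≤ t → t ≤ 1 → ‖F t - F s - Ξ s t‖ ≤ B * (t - s) ^ θ)
    {s t : ℝ} (hs : 0 ≤ s) (ht : t ≤ 1) :
    PartitionLimit s t Ξ (F t - F s) := by
  intro ε hε
  -- `δ` is chosen so that `B * δ ^ (θ - 1) < ε`; the total length of the partition is at most `1`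
  have hδ0 : 0 < (ε / (B + 1)) ^ (1 / (θ - 1)) := by positivity
  refine ⟨(ε / (B + 1)) ^ (1 / (θ - 1)), hδ0, ?_⟩
  intro k π hk h0 hkt hinc hmesh
  set η := ε / (B + 1) with hη
  have hη0 : 0 < η := by positivity
  have hmono : ∀ i j, i ≤ j → j ≤ k → π i ≤ π j := by
    intro i j hij
    induction j, hij using Nat.le_induction with
    | base => intro _; exact le_rfl
    | succ j hij ih => intro hj; exact (ih (by omega)).trans (hinc j (by omega)).le
  have hterm : ∀ i ∈ Finset.range k,
      ‖Ξ (π i) (π (i + 1)) - (F (π (i + 1)) - F (π i))‖ ≤ B * η * (π (i + 1) - π i) := by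
    intro i hi
    have hi := Finset.mem_range.1 hi
    rw [norm_sub_rev]
    have hpos : 0 < π (i + 1) - π i := sub_pos.2 (hinc i hi)
    refine (hF _ _ ?_ (hinc i hi).le ?_).trans ?_
    · have := hmono 0 i (by omega) (by omega); linarith
    · have := hmono (i + 1) k (by omega) le_rfl; linarith
    · rw [mul_assoc]
      refine mul_le_mul_of_nonneg_left ?_ hB
      calc (π (i + 1) - π i) ^ θ
          = (π (i + 1) - π i) ^ (θ - 1) * (π (i + 1) - π i) := by
            rw [← Real.rpow_add_one hpos.ne']; congr 1; ring
        _ ≤ (η ^ (1 / (θ - 1))) ^ (θ - 1) * (π (i + 1) - π i) := by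
            refine mul_le_mul_of_nonneg_right ?_ hpos.le
            exact Real.rpow_le_rpow hpos.le (hmesh i hi).le (by linarith)
        _ = η * (π (i + 1) - π i) := by
            rw [← Real.rpow_mul hη0.le, one_div, inv_mul_cancel₀ (by linarith), Real.rpow_one]
  have htel : F t - F s = ∑ i ∈ Finset.range k, (F (π (i + 1)) - F (π i)) := by
    rw [Finset.sum_range_sub (fun i => F (π i)), h0, hkt]
  rw [htel, ← Finset.sum_sub_distrib]
  refine (norm_sum_le_of_le _ hterm).trans_lt ?_
  rw [← Finset.mul_sum, Finset.sum_range_sub, h0, hkt]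
  have hBη : B * η < ε := by
    rw [hη, mul_div_assoc', div_lt_iff₀ (by linarith)]
    nlinarith
  have : 0 ≤ B * η := by positivity
  nlinarith

end Sewing

/-! ### Hölder seminorms and the germ of the rough integral -/

section Germ

variable {X : Type*} [NormedAddCommGroup X]

lemma holderNorm_nonneg (β : ℝ) (f : ℝ → X) : 0 ≤ holderNorm β 0 1 f := by
  refine Real.sSup_nonneg ?_
  rintro _ ⟨s, t, -, -, -, rfl⟩
  positivity

lemma holder2Norm_nonneg (β : ℝ) (R : ℝ → ℝ → X) : 0 ≤ holder2Norm β 0 1 R := by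
  refine Real.sSup_nonneg ?_
  rintro _ ⟨s, t, -, -, hst, rfl⟩
  exact div_nonneg (norm_nonneg _) (Real.rpow_nonneg (sub_nonneg.2 hst.le) _)

lemma norm_sub_le_holderNorm {β : ℝ} {f : ℝ → X} (hf : BddAbove (holderSet β 0 1 f)) {s t : ℝ}
    (hs : 0 ≤ s) (hst : s < t) (ht : t ≤ 1) :
    ‖f t - f s‖ ≤ holderNorm β 0 1 f * (t - s) ^ β := by
  have hpos : 0 < t - s := sub_pos.2 hst
  have := le_csSup hf ⟨s, t, ⟨hs, hst.le.trans ht⟩, ⟨hs.trans hst.le, ht⟩, hst.ne, rfl⟩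
  rw [abs_of_pos hpos, div_le_iff₀ (Real.rpow_pos_of_pos hpos _)] at this
  exact this

lemma norm_le_holder2Norm {β : ℝ} {R : ℝ → ℝ → X} (hR : BddAbove (holder2Set β 0 1 R)) {s t : ℝ}
    (hs : 0 ≤ s) (hst : s < t) (ht : t ≤ 1) :
    ‖R s t‖ ≤ holder2Norm β 0 1 R * (t - s) ^ β := by
  have hpos : 0 < t - s := sub_pos.2 hst
  have := le_csSup hR ⟨s, t, ⟨hs, hst.le.trans ht⟩, ⟨hs.trans hst.le, ht⟩, hst, rfl⟩
  rw [div_le_iff₀ (Real.rpow_pos_of_pos hpos _)] at this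
  exact this

variable [NormedSpace ℝ X] {d : ℕ}

lemma norm_bilApply_le (B : (Fin d → ℝ) →L[ℝ] ((Fin d → ℝ) →L[ℝ] X))
    (M : Fin d → Fin d → ℝ) : ‖bilApply B M‖ ≤ (d : ℝ) ^ 2 * (‖M‖ * ‖B‖) := by
  have hs : ∀ i : Fin d, ‖(Pi.single i 1 : Fin d → ℝ)‖ ≤ 1 := fun i => by
    rw [Pi.norm_single, norm_one]
  have hterm : ∀ i j : Fin d, ‖M i j • B (Pi.single i 1) (Pi.single j 1)‖ ≤ ‖M‖ * ‖B‖ := by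
    intro i j
    rw [norm_smul]
    refine mul_le_mul ((norm_le_pi_norm (M i) j).trans (norm_le_pi_norm M i)) ?_
      (norm_nonneg _) (norm_nonneg _)
    refine (B.le_opNorm₂ _ _).trans ?_
    calc ‖B‖ * ‖(Pi.single i 1 : Fin d → ℝ)‖ * ‖(Pi.single j 1 : Fin d → ℝ)‖
        ≤ ‖B‖ * 1 * 1 := by gcongr <;> exact hs _
      _ = ‖B‖ := by ring
  unfold bilApply
  refine (norm_sum_le_of_le _ (fun i _ => norm_sum_le_of_le _ (fun j _ => hterm i j))).trans
    (le_of_eq ?_)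
  simp only [Finset.sum_const, Finset.card_univ, Fintype.card_fin, nsmul_eq_mul]
  ring

lemma bilApply_tensor (B : (Fin d → ℝ) →L[ℝ] ((Fin d → ℝ) →L[ℝ] X)) (x y : Fin d → ℝ) :
    bilApply B (fun i j => x i * y j) = B x y := by
  conv_rhs => rw [pi_eq_sum_univ' x, pi_eq_sum_univ' y]
  simp only [map_sum, map_smul, sum_apply, smul_apply,
    bilApply, mul_smul, Finset.smul_sum]
  rw [Finset.sum_comm]
  exact Finset.sum_congr rfl fun j _ => Finset.sum_congr rfl fun i _ => smul_comm _ _ _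

lemma bilApply_add_right (B : (Fin d → ℝ) →L[ℝ] ((Fin d → ℝ) →L[ℝ] X))
    (M N : Fin d → Fin d → ℝ) : bilApply B (M + N) = bilApply B M + bilApply B N := by
  simp only [bilApply, Pi.add_apply, add_smul, Finset.sum_add_distrib]

lemma bilApply_sub_left (B B' : (Fin d → ℝ) →L[ℝ] ((Fin d → ℝ) →L[ℝ] X))
    (M : Fin d → Fin d → ℝ) : bilApply (B - B') M = bilApply B M - bilApply B' M := by
  simp only [bilApply, sub_apply, smul_sub, Finset.sum_sub_distrib]

end Germ

/-- The algebraic identity for the defect of the germ, from Chen's relation for `(s,u,t)`. -/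
lemma germ_defect {d n : ℕ} (W : ℝ → Fin d → ℝ) (WW : ℝ → ℝ → Fin d → Fin d → ℝ)
    (Y : ℝ → (Fin d → ℝ) →L[ℝ] (Fin n → ℝ))
    (Y' : ℝ → (Fin d → ℝ) →L[ℝ] ((Fin d → ℝ) →L[ℝ] (Fin n → ℝ))) {s u t : ℝ}
    (hchen : WW s t - WW s u - WW u t = fun i j => (W u - W s) i * (W t - W u) j) :
    (Y s (W t - W s) + bilApply (Y' s) (WW s t)) - (Y s (W u - W s) + bilApply (Y' s) (WW s u))
      - (Y u (W t - W u) + bilApply (Y' u) (WW u t))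
      = -(rem W Y Y' s u (W t - W u) + bilApply (Y' u - Y' s) (WW u t)) := by
  have hst : WW s t = (fun i j => (W u - W s) i * (W t - W u) j) + WW s u + WW u t := by
    rw [← hchen]; abel
  rw [hst, bilApply_add_right, bilApply_add_right, bilApply_tensor, bilApply_sub_left,
    show W t - W s = (W t - W u) + (W u - W s) by abel, map_add]
  simp only [rem, sub_apply]
  abel


/-- Existence of the Gubinelli rough integral of a controlled rough path
`(Y,Y')` against an `α`-Hölder rough path `(W,𝕎)`, together with the local estimate
`‖∫_s^t Y dW - Y_s W_{s,t} - Y'_s 𝕎_{s,t}‖ ≤ C (‖W‖_α ‖R^Y‖_{2α} + ‖𝕎‖_{2α} ‖Y'‖_α)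
|t-s|^{3α}` with `C` depending only on `α`. -/
theorem stmt2 {d n : ℕ} (α : ℝ) (hα : 1/3 < α ∧ α ≤ 1/2) :
    ∃ C : ℝ, 0 < C ∧
      ∀ (W : ℝ → Fin d → ℝ) (WW : ℝ → ℝ → Fin d → Fin d → ℝ)
        (Y : ℝ → (Fin d → ℝ) →L[ℝ] (Fin n → ℝ))
        (Y' : ℝ → (Fin d → ℝ) →L[ℝ] ((Fin d → ℝ) →L[ℝ] (Fin n → ℝ))),
        BddAbove (holderSet α 0 1 W) →
        BddAbove (holder2Set (2*α) 0 1 WW) →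
        (∀ s u t : ℝ, 0 ≤ s → s ≤ u → u ≤ t → t ≤ 1 →
          WW s t - WW s u - WW u t = fun i j => (W u - W s) i * (W t - W u) j) →
        BddAbove (holderSet α 0 1 Y) →
        BddAbove (holderSet α 0 1 Y') →
        BddAbove (holder2Set (2*α) 0 1 (rem W Y Y')) →
        ∃ I : ℝ → ℝ → Fin n → ℝ,
          ∀ s ∈ Set.Icc (0:ℝ) 1, ∀ t ∈ Set.Icc (0:ℝ) 1, s ≤ t →
            PartitionLimit s t
              (fun u v => (Y u) (W v - W u) + bilApply (Y' u) (WW u v)) (I s t) ∧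
            ‖I s t - (Y s) (W t - W s) - bilApply (Y' s) (WW s t)‖ ≤
              C * (holderNorm α 0 1 W * holder2Norm (2*α) 0 1 (rem W Y Y')
                  + holder2Norm (2*α) 0 1 WW * holderNorm α 0 1 Y') * (t - s) ^ (3*α) := by
  obtain ⟨hα1, hα2⟩ := hα
  have hθ : 1 < 3 * α := by linarith
  have hA := sewConst_pos hθ
  refine ⟨sewConst (3 * α) * ((d : ℝ) ^ 2 + 1), by positivity, ?_⟩
  intro W WW Y Y' hW hWW hchen _ hY' hR
  have nW := holderNorm_nonneg α W
  have nWW := holder2Norm_nonneg (2 * α) WW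
  have nY' := holderNorm_nonneg α Y'
  have nR := holder2Norm_nonneg (2 * α) (rem W Y Y')
  set hw := holderNorm α 0 1 W
  set hww := holder2Norm (2 * α) 0 1 WW
  set hy := holderNorm α 0 1 Y'
  set hr := holder2Norm (2 * α) 0 1 (rem W Y Y')
  set Ξ : ℝ → ℝ → Fin n → ℝ := fun u v => (Y u) (W v - W u) + bilApply (Y' u) (WW u v) with hΞ
  have hM : 0 ≤ hw * hr + hww * hy := by positivity
  have hWWdiag : ∀ s : ℝ, 0 ≤ s → s ≤ 1 → WW s s = 0 := by
    intro s h0 h1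
    have := hchen s s s h0 le_rfl le_rfl h1
    funext i j
    have := congrFun (congrFun this i) j
    simpa using this
  have hadd : AlmostAdditive Ξ (((d : ℝ) ^ 2 + 1) * (hw * hr + hww * hy)) (3 * α) := by
    intro s u t hs hsu hut ht
    have hRHS : 0 ≤ ((d : ℝ) ^ 2 + 1) * (hw * hr + hww * hy) * (t - s) ^ (3 * α) :=
      mul_nonneg (by positivity) (Real.rpow_nonneg (by linarith) _)
    have hdef := germ_defect W WW Y Y' (hchen s u t hs hsu hut ht)
    simp only [hΞ]
    rw [hdef, norm_neg]
    -- the Hölder bounds are available for distinct times only, so coincident times are separate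
    rcases hsu.eq_or_lt with rfl | hsu'
    · simpa [rem, bilApply] using hRHS
    rcases hut.eq_or_lt with rfl | hut'
    · rw [hWWdiag u (hs.trans hsu) ht]
      simpa [bilApply] using hRHS
    have hsplit : ∀ x y : ℝ, 0 ≤ x → x ≤ t - s → 0 ≤ y → y ≤ t - s →
        x ^ (2 * α) * y ^ α ≤ (t - s) ^ (3 * α) := by
      intro x y hx hxt hy0 hyt
      have hpos : 0 < t - s := by linarith
      rw [show 3 * α = 2 * α + α by ring, Real.rpow_add hpos]
      exact mul_le_mul (Real.rpow_le_rpow hx hxt (by linarith))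
        (Real.rpow_le_rpow hy0 hyt (by linarith)) (Real.rpow_nonneg hy0 _)
        (Real.rpow_nonneg hpos.le _)
    have bR := norm_le_holder2Norm hR hs hsu' (hut.trans ht)
    have bW := norm_sub_le_holderNorm hW (hs.trans hsu) hut' ht
    have bY := norm_sub_le_holderNorm hY' hs hsu' (hut.trans ht)
    have bWW := norm_le_holder2Norm hWW (hs.trans hsu) hut' ht
    have p1 : 0 ≤ (u - s) ^ (2 * α) := Real.rpow_nonneg (by linarith) _
    have p2 : 0 ≤ (t - u) ^ (2 * α) := Real.rpow_nonneg (by linarith) _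
    have t1 : ‖rem W Y Y' s u (W t - W u)‖ ≤ (hw * hr) * (t - s) ^ (3 * α) := by
      refine (ContinuousLinearMap.le_opNorm _ _).trans ?_
      calc ‖rem W Y Y' s u‖ * ‖W t - W u‖
          ≤ (hr * (u - s) ^ (2 * α)) * (hw * (t - u) ^ α) :=
            mul_le_mul bR bW (norm_nonneg _) (mul_nonneg nR p1)
        _ = (hw * hr) * ((u - s) ^ (2 * α) * (t - u) ^ α) := by ring
        _ ≤ _ := mul_le_mul_of_nonneg_left
            (hsplit _ _ (by linarith) (by linarith) (by linarith) (by linarith)) (by positivity)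
    have t2 : ‖bilApply (Y' u - Y' s) (WW u t)‖
        ≤ (d : ℝ) ^ 2 * ((hww * hy) * (t - s) ^ (3 * α)) := by
      refine (norm_bilApply_le _ _).trans (mul_le_mul_of_nonneg_left ?_ (by positivity))
      calc ‖WW u t‖ * ‖Y' u - Y' s‖
          ≤ (hww * (t - u) ^ (2 * α)) * (hy * (u - s) ^ α) :=
            mul_le_mul bWW bY (ContinuousLinearMap.opNorm_nonneg _) (mul_nonneg nWW p2)
        _ = (hww * hy) * ((t - u) ^ (2 * α) * (u - s) ^ α) := by ring
        _ ≤ _ := mul_le_mul_of_nonneg_left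
            (hsplit _ _ (by linarith) (by linarith) (by linarith) (by linarith)) (by positivity)
    refine (norm_add_le _ _).trans ((add_le_add t1 t2).trans ?_)
    have hts : 0 ≤ (t - s) ^ (3 * α) := Real.rpow_nonneg (by linarith) _
    have q1 : 0 ≤ (d : ℝ) ^ 2 * (hw * hr * (t - s) ^ (3 * α)) := by positivity
    have q2 : 0 ≤ hww * hy * (t - s) ^ (3 * α) := by positivity
    linarith
  obtain ⟨F, hF⟩ := sewing hadd (by positivity) hθ
  refine ⟨fun s t => F t - F s, fun s hs t ht hst => ⟨?_, ?_⟩⟩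
  · exact partitionLimit_of_local_bound (by positivity) hθ hF hs.1 ht.2
  · have := hF s t hs.1 hst ht.2
    rw [sub_sub (F t - F s), mul_assoc (sewConst (3 * α)) ((d : ℝ) ^ 2 + 1)]
    exact this
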